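/- For a Lie point characteristic Q, the prolonged vector field commutes with each operator T^i: for every difference Lagrangian L (depending only on forward values u(n+J), J ≥ 0 componentwise), every i ∈ {1,…,p}, and all n ∈ ℤ^p and fields u : ℤ^p → ℝ^q, (pr v(T^i(L)))(n,u) = (T^i(pr v(L)))(n,u); equivalently, [pr v, T^i] = 0 on difference Lagrangians. -/

import Mathlib

open scoped Classical

/-- Multi-indices / lattice points of the lattice `ℤ^p`. -/
abbrev Idx (p : ℕ) : Type := Fin p → ℤ

/-- Fields `u : ℤ^p → ℝ^q`. -/
abbrev Fld (p q : ℕ) : Type := Idx p → Fin q → ℝ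

/-- Difference functions (raw): functions of a lattice point and a field. -/
abbrev DFun (p q : ℕ) : Type := Idx p → Fld p q → ℝ

/-- Replace the value `u^α(m)` of the field `u` by `t`. -/
noncomputable def upd {p q : ℕ} (u : Fld p q) (m : Idx p) (α : Fin q) (t : ℝ) : Fld p q :=
  fun m' β => if m' = m ∧ β = α then t else u m' β

/-- The partial derivative `∂F/∂u_J^α (n,u)`: the derivative of `F(n,u)` with
respect to the value `u^α(n+J)`. -/
noncomputable def pd {p q : ℕ} (F : DFun p q) (J : Idx p) (α : Fin q) : DFun p q :=
  fun n u => deriv (fun t => F n (upd u (n + J) α t)) (u (n + J) α)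

/-- The shift operator `S_K`. -/
def Sh {p q : ℕ} (K : Idx p) (F : DFun p q) : DFun p q := fun n u => F (n + K) u

/-- `F` is a difference function with stencil `S`: `F(n,u)` depends on `u` only
through the finitely many values `u(n+J)`, `J ∈ S`, smoothly in those values. -/
def IsDiffFun {p q : ℕ} (F : DFun p q) (S : Finset (Idx p)) : Prop :=
  ∃ G : Idx p → (({J // J ∈ S} → Fin q → ℝ) → ℝ),
    (∀ n, ContDiff ℝ (⊤ : ℕ∞) (G n)) ∧ ∀ n u, F n u = G n fun J α => u (n + J.1) α

/-- The prolonged vector field of a characteristic `Q`, acting on a difference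
function `F` with stencil `S`:
`(pr v F)(n,u) = Σ_α Σ_{J ∈ S} (S_J Q^α)(n,u) ⬝ ∂F/∂u_J^α(n,u)`. -/
noncomputable def prv {p q : ℕ} (Q : Fin q → DFun p q) (S : Finset (Idx p))
    (F : DFun p q) : DFun p q :=
  fun n u => ∑ α : Fin q, ∑ J ∈ S, Q α (n + J) u * pd F J α n u

/-- The difference divergence of a `p`-tuple of difference functions. -/
noncomputable def DDiv {p q : ℕ} (P : Fin p → DFun p q) : DFun p q :=
  fun n u => ∑ i : Fin p, (P i (n + Pi.single i (1 : ℤ)) u - P i n u)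

/-- The Euler–Lagrange expression `E_α(F)(n,u) = Σ_{J ∈ S} (∂F/∂u_J^α)(n−J,u)`
of a difference function `F` with stencil `S`. -/
noncomputable def EL {p q : ℕ} (S : Finset (Idx p)) (F : DFun p q) (α : Fin q) : DFun p q :=
  fun n u => ∑ J ∈ S, pd F J α (n - J) u

/-- The higher Euler operator
`E_{u_J^α}(L)(n,u) = Σ_{J0 ≥ 0} (∂L/∂u_{J0+J}^α)(n−J0,u)` for a difference
function `L` depending only on forward values, with stencil `S`
(reindexed by `K = J0 + J`; terms with `K ∉ S` vanish). -/
noncomputable def hEuler {p q : ℕ} (S : Finset (Idx p)) (L : DFun p q) (J : Idx p)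
    (α : Fin q) : DFun p q :=
  fun n u => ∑ K ∈ S.filter (fun K => J ≤ K), pd L K α (n - (K - J)) u

/-- `T^i(L)(n,u) = Σ_α Σ_{J ≥ 1_i} (S_{J−1_i} Q^α)(n,u) ⬝ E_{u_J^α}(L)(n−1_i,u)`
(a finite sum: only `J` with `1_i ≤ J ≤ K` for some stencil point `K` contribute). -/
noncomputable def TT {p q : ℕ} (Q : Fin q → DFun p q) (S : Finset (Idx p)) (i : Fin p)
    (L : DFun p q) : DFun p q :=
  fun n u => ∑ α : Fin q, ∑ J ∈ S.biUnion (fun K => Finset.Icc (Pi.single i (1 : ℤ)) K),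
    Q α (n + J - Pi.single i (1 : ℤ)) u * hEuler S L J α (n - Pi.single i (1 : ℤ)) u

/-- Partial derivative of a functional of the field in the value `u^α(x)`. -/
noncomputable def DD {p q : ℕ} (f : Fld p q → ℝ) (x : Idx p) (α : Fin q) : Fld p q → ℝ :=
  fun u => deriv (fun t => f (upd u x α t)) (u x α)

/-- Smoothness of functionals, tested on smooth finite-parameter families of fields. -/
def SmF {p q : ℕ} (f : Fld p q → ℝ) : Prop :=
  ∀ (E : Type) [NormedAddCommGroup E] [NormedSpace ℝ E] (g : E → Fld p q),
    (∀ x α, ContDiff ℝ (⊤ : ℕ∞) (fun e => g e x α)) → ContDiff ℝ (⊤ : ℕ∞) (fun e => f (g e))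

/-- The part of the prolonged vector field at the lattice point `x`. -/
noncomputable def VV {p q : ℕ} (Q : Fin q → DFun p q) (x : Idx p) (f : Fld p q → ℝ) :
    Fld p q → ℝ :=
  fun u => ∑ α : Fin q, Q α x u * DD f x α u

theorem upd_smooth {p q : ℕ} {E : Type} [NormedAddCommGroup E] [NormedSpace ℝ E]
    (g : E → Fld p q) (hg : ∀ x α, ContDiff ℝ (⊤ : ℕ∞) (fun e => g e x α))
    (s : E → ℝ) (hs : ContDiff ℝ (⊤ : ℕ∞) s) (y : Idx p) (β : Fin q) :
    ∀ x α, ContDiff ℝ (⊤ : ℕ∞) (fun e => upd (g e) y β (s e) x α) := by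
  intro x α
  unfold upd
  by_cases h : x = y ∧ α = β
  · simpa only [if_pos h] using hs
  · simpa only [if_neg h] using hg x α

theorem SmF.of_isDiffFun {p q : ℕ} {F : DFun p q} {S : Finset (Idx p)} (h : IsDiffFun F S)
    (n : Idx p) : SmF (F n) := by
  obtain ⟨G, hG, hF⟩ := h
  intro E _ _ g hg
  simp only [hF]
  refine (hG n).comp ?_
  rw [contDiff_pi]
  intro J
  rw [contDiff_pi]
  intro α
  exact hg _ _

theorem SmF.mul {p q : ℕ} {f g : Fld p q → ℝ} (hf : SmF f) (hg : SmF g) :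
    SmF (fun u => f u * g u) := by
  intro E _ _ c hc
  exact (hf E c hc).mul (hg E c hc)

theorem SmF.sum {p q : ℕ} {ι : Type*} (A : Finset ι) (f : ι → Fld p q → ℝ)
    (hf : ∀ a ∈ A, SmF (f a)) : SmF (fun u => ∑ a ∈ A, f a u) := by
  intro E _ _ c hc
  exact ContDiff.sum (fun a ha => hf a ha E c hc)

theorem SmF.DD {p q : ℕ} {f : Fld p q → ℝ} (hf : SmF f) (x : Idx p) (α : Fin q) :
    SmF (DD f x α) := by
  intro E _ _ g hg
  have h1 : ContDiff ℝ (⊤ : ℕ∞) (fun z : E × ℝ => f (upd (g z.1) x α z.2)) :=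
    hf (E × ℝ) _ (upd_smooth (fun z : E × ℝ => g z.1)
      (fun y β => (hg y β).comp contDiff_fst) _ contDiff_snd x α)
  unfold _root_.DD
  simp only [← fderiv_apply_one_eq_deriv]
  exact ContDiff.fderiv_apply (f := fun e t => f (upd (g e) x α t)) (n := (⊤ : ℕ∞)) h1 (hg x α)
    contDiff_const (by simp)

theorem SmF.VV {p q : ℕ} {Q : Fin q → DFun p q} (hQ : ∀ α x, SmF (Q α x))
    {f : Fld p q → ℝ} (hf : SmF f) (x : Idx p) : SmF (VV Q x f) :=
  SmF.sum _ _ (fun α _ => (hQ α x).mul (hf.DD x α))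

theorem SmF.diff {p q : ℕ} {f : Fld p q → ℝ} (hf : SmF f) (x : Idx p) (α : Fin q)
    (u : Fld p q) : Differentiable ℝ (fun t => f (upd u x α t)) :=
  (hf ℝ _ (upd_smooth (fun _ => u) (fun _ _ => contDiff_const) _ contDiff_id x α)).differentiable
    (by simp)

theorem DD_sum {p q : ℕ} {ι : Type*} (A : Finset ι) (f : ι → Fld p q → ℝ)
    (hf : ∀ a ∈ A, SmF (f a)) (x : Idx p) (α : Fin q) (u : Fld p q) :
    DD (fun u => ∑ a ∈ A, f a u) x α u = ∑ a ∈ A, DD (f a) x α u := by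
  unfold DD
  exact deriv_fun_sum (fun a ha => (hf a ha).diff x α u _)

theorem VV_sum {p q : ℕ} (Q : Fin q → DFun p q) {ι : Type*} (A : Finset ι)
    (f : ι → Fld p q → ℝ) (hf : ∀ a ∈ A, SmF (f a)) (x : Idx p) (u : Fld p q) :
    VV Q x (fun u => ∑ a ∈ A, f a u) u = ∑ a ∈ A, VV Q x (f a) u := by
  unfold VV
  rw [Finset.sum_comm]
  refine Finset.sum_congr rfl fun α _ => ?_
  rw [DD_sum A f hf, Finset.mul_sum]

theorem DD_mul_left {p q : ℕ} {f g : Fld p q → ℝ} (x : Idx p) (α : Fin q) (u : Fld p q)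
    (hind : ∀ t, f (upd u x α t) = f u) :
    DD (fun u => f u * g u) x α u = f u * DD g x α u := by
  unfold DD
  simp only [hind]
  exact deriv_const_mul_field _

theorem upd_comm {p q : ℕ} (u : Fld p q) {x y : Idx p} (h : x ≠ y) (α β : Fin q) (s t : ℝ) :
    upd (upd u x α s) y β t = upd (upd u y β t) x α s := by
  funext z γ
  unfold upd
  by_cases h1 : z = y ∧ γ = β
  · have : ¬ (z = x ∧ γ = α) := fun h2 => h (h2.1.symm.trans h1.1)
    simp only [if_pos h1, if_neg this]
  · simp only [if_neg h1]

theorem upd_other {p q : ℕ} (u : Fld p q) {x y : Idx p} (h : y ≠ x) (α β : Fin q) (s : ℝ) :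
    upd u x α s y β = u y β := by
  unfold upd
  rw [if_neg (fun h2 => h h2.1)]

theorem iter_deriv {φ : ℝ × ℝ → ℝ} (hφ : ContDiff ℝ (⊤ : ℕ∞) φ) (s0 t0 : ℝ) :
    deriv (fun s => deriv (fun t => φ (s, t)) t0) s0
      = fderiv ℝ (fderiv ℝ φ) (s0, t0) (1, 0) (0, 1) ∧
    deriv (fun t => deriv (fun s => φ (s, t)) s0) t0
      = fderiv ℝ (fderiv ℝ φ) (s0, t0) (0, 1) (1, 0) := by
  have hd : Differentiable ℝ φ := hφ.differentiable (by simp)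
  have hd2 : Differentiable ℝ (fderiv ℝ φ) :=
    (hφ.fderiv_right (m := 1) (by norm_cast)).differentiable (by simp)
  have a1 : ∀ s t : ℝ, HasDerivAt (fun s => ((s, t) : ℝ × ℝ)) (1, 0) s := fun s t =>
    (hasDerivAt_id s).prodMk (hasDerivAt_const s t)
  have a2 : ∀ s t : ℝ, HasDerivAt (fun t => ((s, t) : ℝ × ℝ)) (0, 1) t := fun s t =>
    (hasDerivAt_const t s).prodMk (hasDerivAt_id t)
  have b1 : ∀ s t : ℝ, deriv (fun s => φ (s, t)) s = fderiv ℝ φ (s, t) (1, 0) := fun s t =>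
    ((hd (s, t)).hasFDerivAt.comp_hasDerivAt s (a1 s t)).deriv
  have b2 : ∀ s t : ℝ, deriv (fun t => φ (s, t)) t = fderiv ℝ φ (s, t) (0, 1) := fun s t =>
    ((hd (s, t)).hasFDerivAt.comp_hasDerivAt t (a2 s t)).deriv
  simp only [b1, b2]
  constructor
  · have := ((hd2 (s0, t0)).hasFDerivAt.comp_hasDerivAt s0 (a1 s0 t0))
    exact (this.clm_apply (hasDerivAt_const s0 ((0, 1) : ℝ × ℝ))).deriv.trans (by simp)
  · have := ((hd2 (s0, t0)).hasFDerivAt.comp_hasDerivAt t0 (a2 s0 t0))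
    exact (this.clm_apply (hasDerivAt_const t0 ((1, 0) : ℝ × ℝ))).deriv.trans (by simp)

theorem DD_comm {p q : ℕ} {f : Fld p q → ℝ} (hf : SmF f) {x y : Idx p} (h : x ≠ y)
    (α β : Fin q) (u : Fld p q) : DD (DD f y β) x α u = DD (DD f x α) y β u := by
  have hφ : ContDiff ℝ (⊤ : ℕ∞) (fun z : ℝ × ℝ => f (upd (upd u x α z.1) y β z.2)) :=
    hf (ℝ × ℝ) _ (upd_smooth _ (upd_smooth (fun _ => u) (fun _ _ => contDiff_const) _
      contDiff_fst x α) _ contDiff_snd y β)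
  obtain ⟨h1, h2⟩ := iter_deriv hφ (u x α) (u y β)
  have hs : IsSymmSndFDerivAt ℝ (fun z : ℝ × ℝ => f (upd (upd u x α z.1) y β z.2))
      (u x α, u y β) := hφ.contDiffAt.isSymmSndFDerivAt
        (by simp only [minSmoothness_of_isRCLikeNormedField]; exact WithTop.coe_le_coe.2 (le_top : (2 : ℕ∞) ≤ ⊤))
  unfold DD
  simp only [upd_other u h, upd_other u h.symm]
  simp only [← upd_comm u h]
  rw [h1, h2]
  exact hs _ _

theorem VV_comm {p q : ℕ} {Q : Fin q → DFun p q} (hQ : ∀ α x, SmF (Q α x))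
    (hind : ∀ α x y, x ≠ y → ∀ β t u, Q α x (upd u y β t) = Q α x u)
    {f : Fld p q → ℝ} (hf : SmF f) (x y : Idx p) (u : Fld p q) :
    VV Q x (VV Q y f) u = VV Q y (VV Q x f) u := by
  by_cases h : x = y
  · rw [h]
  have key : ∀ x y : Idx p, x ≠ y → VV Q x (VV Q y f) u
      = ∑ α, ∑ β, Q α x u * (Q β y u * DD (DD f y β) x α u) := by
    intro x y h
    change ∑ α, Q α x u * DD (fun u => ∑ β, Q β y u * DD f y β u) x α u = _
    refine Finset.sum_congr rfl fun α _ => ?_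
    rw [DD_sum _ (fun β u => Q β y u * DD f y β u) (fun β _ => (hQ β y).mul (hf.DD y β)),
      Finset.mul_sum]
    refine Finset.sum_congr rfl fun β _ => ?_
    rw [DD_mul_left x α u (fun t => hind β y x h.symm α t u)]
  rw [key x y h, key y x (Ne.symm h), Finset.sum_comm]
  refine Finset.sum_congr rfl fun β _ => Finset.sum_congr rfl fun α _ => ?_
  rw [DD_comm hf h]
  ring

theorem indep_of_isDiffFun {p q : ℕ} {F : DFun p q} {S : Finset (Idx p)} (h : IsDiffFun F S)
    (n x : Idx p) (hx : ∀ J ∈ S, n + J ≠ x) (α : Fin q) (t : ℝ) (u : Fld p q) :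
    F n (upd u x α t) = F n u := by
  obtain ⟨G, -, hF⟩ := h
  rw [hF, hF]
  congr 1
  funext J β
  exact upd_other u (hx J.1 J.2) α β t

theorem VV_zero {p q : ℕ} (Q : Fin q → DFun p q) {F : DFun p q} {S : Finset (Idx p)}
    (h : IsDiffFun F S) (n x : Idx p) (hx : ∀ J ∈ S, n + J ≠ x) (u : Fld p q) :
    VV Q x (F n) u = 0 := by
  unfold VV DD
  simp only [indep_of_isDiffFun h n x hx]
  simp

theorem prv_eq {p q : ℕ} (Q : Fin q → DFun p q) {F : DFun p q} {S : Finset (Idx p)}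
    (h : IsDiffFun F S) (n : Idx p) (u : Fld p q) (A : Finset (Idx p))
    (hA : ∀ J ∈ S, n + J ∈ A) : prv Q S F n u = ∑ x ∈ A, VV Q x (F n) u := by
  have h1 : prv Q S F n u = ∑ x ∈ S.image (fun J => n + J), VV Q x (F n) u := by
    rw [Finset.sum_image (fun a _ b _ hab => add_left_cancel hab)]
    unfold prv
    rw [Finset.sum_comm]
    rfl
  rw [h1]
  refine Finset.sum_subset ?_ ?_
  · intro x hx
    obtain ⟨J, hJ, rfl⟩ := Finset.mem_image.1 hx
    exact hA J hJ
  · intro x _ hx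
    exact VV_zero Q h n x (fun J hJ he => hx (Finset.mem_image.2 ⟨J, hJ, he⟩)) u

theorem TT_eq {p q : ℕ} (Q : Fin q → DFun p q) (S : Finset (Idx p)) (i : Fin p)
    (F : DFun p q) (n : Idx p) (u : Fld p q) :
    TT Q S i F n u = ∑ J ∈ S.biUnion (fun K => Finset.Icc (Pi.single i (1 : ℤ)) K),
      ∑ K ∈ S.filter (fun K => J ≤ K),
        VV Q (n + J - Pi.single i (1 : ℤ)) (F (n - Pi.single i (1 : ℤ) - (K - J))) u := by
  unfold TT hEuler VV
  rw [Finset.sum_comm]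
  refine Finset.sum_congr rfl fun J _ => ?_
  rw [Finset.sum_comm]
  refine Finset.sum_congr rfl fun α _ => ?_
  rw [Finset.mul_sum]
  refine Finset.sum_congr rfl fun K _ => ?_
  have : n - Pi.single i (1 : ℤ) - (K - J) + K = n + J - Pi.single i (1 : ℤ) := by abel
  unfold pd DD
  rw [this]

theorem TT_form {p q : ℕ} (Q : Fin q → DFun p q) (S : Finset (Idx p)) (i : Fin p)
    (n : Idx p) : ∃ (B : Finset (Idx p)) (C : Idx p → Finset (Idx p)) (a : Idx p → Idx p)
      (m : Idx p → Idx p → Idx p), ∀ (F : DFun p q) (u : Fld p q),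
        TT Q S i F n u = ∑ J ∈ B, ∑ K ∈ C J, VV Q (a J) (F (m J K)) u := by
  refine ⟨S.biUnion (fun K => Finset.Icc (Pi.single i (1 : ℤ)) K),
    fun J => S.filter (fun K => J ≤ K), fun J => n + J - Pi.single i (1 : ℤ),
    fun J K => n - Pi.single i (1 : ℤ) - (K - J), ?_⟩
  intro F u
  rw [TT_eq]

/-- For a Lie point characteristic `Q` (each `Q^α(n,u)` depends
only on `n` and `u(n)`, i.e. has stencil `{0}`), the prolonged vector field
commutes with each operator `T^i`: for every difference Lagrangian `L` and all
`i`, `n`, `u`, `(pr v(T^i(L)))(n,u) = (T^i(pr v(L)))(n,u)`.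
(`ST` is any stencil of the difference function `T^i(L)`; the value of `pr v`
does not depend on the choice of a valid stencil.) -/
theorem stmt_8 {p q : ℕ} (hp : 1 ≤ p) (hq : 1 ≤ q)
    (Q : Fin q → DFun p q)
    (hQ : ∀ α, IsDiffFun (Q α) ({(0 : Idx p)} : Finset (Idx p)))
    (L : DFun p q) (S : Finset (Idx p)) (hL : IsDiffFun L S)
    (hS : ∀ K ∈ S, (0 : Idx p) ≤ K)
    (i : Fin p) (ST : Finset (Idx p)) (hST : IsDiffFun (TT Q S i L) ST)
    (n : Idx p) (u : Fld p q) :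
    prv Q ST (TT Q S i L) n u = TT Q S i (prv Q S L) n u := by
  have hQs : ∀ α x, SmF (Q α x) := fun α x => SmF.of_isDiffFun (hQ α) x
  have hind : ∀ α x y, x ≠ y → ∀ β t u, Q α x (upd u y β t) = Q α x u := by
    intro α x y hxy β t u
    refine indep_of_isDiffFun (hQ α) x y ?_ β t u
    intro J hJ
    rw [Finset.mem_singleton.1 hJ, add_zero]
    exact hxy
  have hLs : ∀ m, SmF (L m) := fun m => SmF.of_isDiffFun hL m
  obtain ⟨B, C, a, m, hTT⟩ := TT_form Q S i n
  let A : Finset (Idx p) := ST.image (fun J => n + J) ∪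
    B.biUnion (fun J => (C J).biUnion (fun K => S.image (fun M => m J K + M)))
  have hA1 : ∀ J ∈ ST, n + J ∈ A := fun J hJ =>
    Finset.mem_union_left _ (Finset.mem_image.2 ⟨J, hJ, rfl⟩)
  have hA2 : ∀ J ∈ B, ∀ K ∈ C J, ∀ M ∈ S, m J K + M ∈ A :=
    fun J hJ K hK M hM => Finset.mem_union_right _ (Finset.mem_biUnion.2 ⟨J, hJ,
      Finset.mem_biUnion.2 ⟨K, hK, Finset.mem_image.2 ⟨M, hM, rfl⟩⟩⟩)
  rw [prv_eq Q hST n u A hA1, hTT]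
  have hT : TT Q S i L n = fun u => ∑ J ∈ B, ∑ K ∈ C J, VV Q (a J) (L (m J K)) u :=
    funext fun u => hTT L u
  have step : ∀ x, VV Q x (TT Q S i L n) u = ∑ J ∈ B, ∑ K ∈ C J,
      VV Q (a J) (VV Q x (L (m J K))) u := by
    intro x
    rw [hT, VV_sum Q B (fun J u => ∑ K ∈ C J, VV Q (a J) (L (m J K)) u)
      (fun J _ => SmF.sum _ _ (fun K _ => SmF.VV hQs (hLs _) _))]
    refine Finset.sum_congr rfl fun J _ => ?_
    rw [VV_sum Q (C J) (fun K => VV Q (a J) (L (m J K)))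
      (fun K _ => SmF.VV hQs (hLs _) _)]
    exact Finset.sum_congr rfl fun K _ => VV_comm hQs hind (hLs _) _ _ u
  simp only [step]
  rw [Finset.sum_comm]
  refine Finset.sum_congr rfl fun J hJ => ?_
  rw [Finset.sum_comm]
  refine Finset.sum_congr rfl fun K hK => ?_
  have hpr : prv Q S L (m J K) = fun u => ∑ x ∈ A, VV Q x (L (m J K)) u :=
    funext fun u => prv_eq Q hL _ u A (hA2 J hJ K hK)
  rw [hpr, VV_sum Q A (fun x => VV Q x (L (m J K))) (fun x _ => SmF.VV hQs (hLs _) _)]
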